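/- arXiv:2510.25341 — 15 statements merged into one kernel-verified Lean document; each statement's English description precedes it below -/
import Mathlib

section
/- If R is a √J-clean ring, then 2 ∈ J(R). -/
/-- `√J(R)`: the set of elements some positive power of which lies in the
Jacobson radical `J(R)` of the ring `R`. -/
def sqrtJ (R : Type*) [Ring R] : Set R :=
  {z : R | ∃ n : ℕ, 1 ≤ n ∧ z ^ n ∈ (⊥ : TwoSidedIdeal R).jacobson}

/-- `R` is a `√J`-clean ring: every element is the sum of an idempotent and an
element of `√J(R)`. -/
def IsSqrtJCleanRing (R : Type*) [Ring R] : Prop :=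
  ∀ a : R, ∃ e z : R, IsIdempotentElem e ∧ z ∈ sqrtJ R ∧ a = e + z

/-- `R` is a strongly `√J`-clean ring: every element is the sum of an idempotent
and an element of `√J(R)` that commute with each other. -/
def IsStronglySqrtJCleanRing (R : Type*) [Ring R] : Prop :=
  ∀ a : R, ∃ e z : R, IsIdempotentElem e ∧ z ∈ sqrtJ R ∧ a = e + z ∧ e * z = z * e

/-- `R` is a uniquely `√J`-clean ring: every element is uniquely the sum of an
idempotent and an element of `√J(R)`. -/
def IsUniquelySqrtJCleanRing (R : Type*) [Ring R] : Prop :=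
  ∀ a : R, ∃! p : R × R, IsIdempotentElem p.1 ∧ p.2 ∈ sqrtJ R ∧ a = p.1 + p.2

/-- `R` is a uniquely clean ring: every element is uniquely the sum of an
idempotent and a unit. -/
def IsUniquelyCleanRing (R : Type*) [Ring R] : Prop :=
  ∀ a : R, ∃! p : R × R, IsIdempotentElem p.1 ∧ IsUnit p.2 ∧ a = p.1 + p.2

theorem two_mem_jacobson_of_sqrtJClean (R : Type*) [Ring R]
    (h : IsSqrtJCleanRing R) : (2 : R) ∈ (⊥ : TwoSidedIdeal R).jacobson := by
  obtain ⟨e, z, he, ⟨n, -, hz⟩, h2⟩ := h 2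
  have he' : e * e = e := he
  have hz' : z = 2 - e := by rw [h2]; abel
  have h1 : e * z = e := by rw [hz', mul_sub, he', mul_two]; abel
  have h1n : ∀ k : ℕ, e * z ^ k = e := by
    intro k
    induction k with
    | zero => simp
    | succ k ih => rw [pow_succ, ← mul_assoc, ih, h1]
  have h3 : (1 - e) * z = (1 - e) * 2 := by
    rw [hz', mul_sub, sub_mul 1 e e, he']; simp
  have h3n : ∀ k : ℕ, (1 - e) * z ^ k = (1 - e) * 2 ^ k := by
    intro k
    induction k with
    | zero => simp
    | succ k ih =>
      have hc : (2 : R) ^ k * z = z * 2 ^ k := ((Commute.ofNat_left 2 z).pow_left k).eq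
      rw [pow_succ, ← mul_assoc, ih, mul_assoc, hc, ← mul_assoc, h3, mul_assoc, ← pow_succ']
  have heJ : e ∈ (⊥ : TwoSidedIdeal R).jacobson := by
    have := TwoSidedIdeal.mul_mem_left _ e _ hz
    rwa [h1n] at this
  have h2n : (2 : R) ^ n ∈ (⊥ : TwoSidedIdeal R).jacobson := by
    have h4 := TwoSidedIdeal.add_mem _ (TwoSidedIdeal.mul_mem_left _ (1 - e) _ hz)
      (TwoSidedIdeal.mul_mem_right _ e (2 ^ n) heJ)
    rw [h3n, ← add_mul] at h4
    simpa using h4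
  rw [TwoSidedIdeal.mem_jacobson_iff]
  intro y
  have hw : (-(y * 2)) ^ n ∈ (⊥ : TwoSidedIdeal R).jacobson := by
    have : (-(y * 2)) ^ n = (-y) ^ n * 2 ^ n := by
      rw [← neg_mul, (Commute.ofNat_right (-y) 2).mul_pow]
    rw [this]
    exact TwoSidedIdeal.mul_mem_left _ _ _ h2n
  obtain ⟨v, hv⟩ := TwoSidedIdeal.mem_jacobson_iff.1 hw (-1)
  refine ⟨v * ∑ i ∈ Finset.range n, (-(y * 2)) ^ i, ?_⟩
  have hg := geom_sum_mul (-(y * 2)) n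
  generalize (-(y * 2)) ^ n = w at *
  generalize (∑ i ∈ Finset.range n, (-(y * 2)) ^ i) = S at *
  convert hv using 1
  have hg' : S * (y * 2) + S = 1 - w := by
    rw [mul_sub, mul_neg, mul_one] at hg
    rw [← neg_sub w 1, ← hg]; abel
  calc v * S * y * 2 + v * S - 1 = v * (S * (y * 2) + S) - 1 := by noncomm_ring
    _ = _ := by rw [hg']; noncomm_ring
end

section
/- If R is a √J-clean ring and φ : R → S is a surjective ring homomorphism, then S is a √J-clean ring. -/
theorem isSqrtJCleanRing_of_surjective (R S : Type*) [Ring R] [Ring S]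
    (φ : R →+* S) (hφ : Function.Surjective φ) (h : IsSqrtJCleanRing R) :
    IsSqrtJCleanRing S := by
  intro b
  obtain ⟨a, rfl⟩ := hφ b
  obtain ⟨e, z, he, ⟨n, hn, hz⟩, rfl⟩ := h a
  refine ⟨φ e, φ z, ?_, ⟨n, hn, ?_⟩, map_add φ e z⟩
  · have := congrArg φ he
    rwa [map_mul] at this
  · rw [TwoSidedIdeal.mem_jacobson_iff] at hz ⊢
    intro y
    obtain ⟨x, rfl⟩ := hφ y
    obtain ⟨w, hw⟩ := hz x
    refine ⟨φ w, ?_⟩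
    rw [TwoSidedIdeal.mem_bot] at hw ⊢
    have := congrArg φ hw
    simpa using this
end

section
/- Every √J-clean ring is a clean ring; that is, if R is √J-clean then every element of R can be written as the sum of an idempotent and a unit. -/
theorem aux_left_inv {R : Type*} [Ring R] {x : R}
    (hx : x ∈ (⊥ : TwoSidedIdeal R).jacobson) : ∃ w : R, w * (1 + x) = 1 := by
  obtain ⟨w, hw⟩ := TwoSidedIdeal.mem_jacobson_iff.1 hx 1
  rw [TwoSidedIdeal.mem_bot] at hw
  refine ⟨w, ?_⟩
  rw [mul_one, sub_eq_zero] at hw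
  rw [mul_add, mul_one, add_comm, hw]

theorem aux_isUnit {R : Type*} [Ring R] {x : R}
    (hx : x ∈ (⊥ : TwoSidedIdeal R).jacobson) : IsUnit (1 + x) := by
  obtain ⟨w, hw⟩ := aux_left_inv hx
  have h1 : -(w * x) ∈ (⊥ : TwoSidedIdeal R).jacobson :=
    TwoSidedIdeal.neg_mem _ (TwoSidedIdeal.mul_mem_left _ _ _ hx)
  obtain ⟨v, hv⟩ := aux_left_inv h1
  have h2 : 1 + -(w * x) = w := by
    rw [← hw]; noncomm_ring
  rw [h2] at hv
  have h3 : v = 1 + x := left_inv_eq_right_inv hv hw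
  rw [h3] at hv
  exact ⟨⟨1 + x, w, hv, hw⟩, rfl⟩

theorem aux_sqrtJ {R : Type*} [Ring R] {z : R} (hz : z ∈ sqrtJ R) : IsUnit (1 + z) := by
  obtain ⟨n, -, hn⟩ := hz
  have h1 : -((-z) ^ n) ∈ (⊥ : TwoSidedIdeal R).jacobson := by
    rw [neg_pow]
    exact TwoSidedIdeal.neg_mem _ (TwoSidedIdeal.mul_mem_left _ _ _ hn)
  have h2 := aux_isUnit h1
  have h3 := mul_neg_geom_sum (-z) n
  rw [sub_neg_eq_add] at h3
  have hc : Commute (1 + z) (∑ i ∈ Finset.range n, (-z) ^ i) := by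
    refine Commute.sum_right _ _ _ fun i _ => ?_
    exact (Commute.one_left _).add_left (((Commute.refl z).neg_right).pow_right i)
  rw [← sub_eq_add_neg, ← h3, hc.isUnit_mul_iff] at h2
  exact h2.1

theorem isClean_of_isSqrtJClean (R : Type*) [Ring R] (h : IsSqrtJCleanRing R) :
    ∀ a : R, ∃ e u : R, IsIdempotentElem e ∧ IsUnit u ∧ a = e + u := by
  intro a
  obtain ⟨e, z, he, hz, ha⟩ := h (a - 1)
  refine ⟨e, 1 + z, he, aux_sqrtJ hz, ?_⟩
  rw [sub_eq_iff_eq_add] at ha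
  rw [ha]; abel
end

section
/- If R is a √J-clean ring in which every idempotent is central (R is abelian), then √J(R) = J(R), i.e., every element z with z^n ∈ J(R) for some n ≥ 1 already lies in J(R). -/
theorem left_inv_aux {R : Type*} [Ring R] {x : R}
    (hx : x ∈ (⊥ : TwoSidedIdeal R).jacobson) (y : R) : ∃ u, u * (1 + y * x) = 1 := by
  obtain ⟨u, hu⟩ := TwoSidedIdeal.mem_jacobson_iff.1 hx y
  refine ⟨u, ?_⟩
  have h0 : u * y * x + u - 1 = 0 := by simpa using hu
  have h1 := sub_eq_zero.1 h0
  rw [mul_add, mul_one, ← mul_assoc, add_comm, h1]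

theorem left_inv_sqrt {R : Type*} [Ring R] {w : R} (hw : w ∈ sqrtJ R) :
    ∃ u, u * (1 + w) = 1 := by
  obtain ⟨m, -, hm⟩ := hw
  obtain ⟨u, hu⟩ := left_inv_aux hm (-(-1) ^ m)
  have h1 := geom_sum_mul (-w) m
  refine ⟨u * ∑ i ∈ Finset.range m, (-w) ^ i, ?_⟩
  have h2 : (∑ i ∈ Finset.range m, (-w) ^ i) * (1 + w) = 1 + -(-1) ^ m * w ^ m := by
    rw [neg_mul, ← neg_pow, show (1 + w) = -(-w - 1) by abel, mul_neg, h1]; abel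
  rw [mul_assoc, h2, hu]

theorem sqrtJ_eq_jacobson_of_abelian (R : Type*) [Ring R]
    (h : IsSqrtJCleanRing R)
    (hab : ∀ e : R, IsIdempotentElem e → ∀ x : R, e * x = x * e) :
    sqrtJ R = ((⊥ : TwoSidedIdeal R).jacobson : Set R) := by
  apply Set.Subset.antisymm
  · rintro z ⟨n, -, hz⟩
    refine TwoSidedIdeal.mem_jacobson_iff.2 fun y => ?_
    obtain ⟨e, w, he, hw, ha⟩ := h (y * z)
    obtain ⟨u, hu⟩ := left_inv_sqrt hw
    have hc := hab e he
    have hee : e * e = e := he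
    have key : u * y * z * e = e := by
      calc u * y * z * e = u * (y * z) * e := by noncomm_ring
        _ = u * ((e + w) * e) := by rw [ha, mul_assoc]
        _ = u * ((1 + w) * e) := by rw [add_mul, add_mul, hee, one_mul]
        _ = e := by rw [← mul_assoc, hu, one_mul]
    have pw : ∀ k : ℕ, (u * y) ^ k * z ^ k * e = e := by
      intro k
      induction k with
      | zero => simp
      | succ k ih =>
        calc (u * y) ^ (k + 1) * z ^ (k + 1) * e
            = (u * y) * ((u * y) ^ k * z ^ k * (z * e)) := by
              rw [pow_succ', pow_succ]; simp only [mul_assoc]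
          _ = (u * y) * ((u * y) ^ k * z ^ k * e * z) := by
              rw [← hc z]; simp only [mul_assoc]
          _ = e := by rw [ih, hc z, ← mul_assoc, key]
    have heJ : e ∈ (⊥ : TwoSidedIdeal R).jacobson := by
      rw [← pw n]
      exact TwoSidedIdeal.mul_mem_right _ _ _ (TwoSidedIdeal.mul_mem_left _ _ _ hz)
    have he0 : e = 0 := by
      obtain ⟨v, hv⟩ := left_inv_aux heJ (-1)
      calc e = v * (1 + -1 * e) * e := by rw [hv, one_mul]
        _ = v * (e - e * e) := by noncomm_ring
        _ = 0 := by rw [hee, sub_self, mul_zero]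
    rw [he0, zero_add] at ha
    refine ⟨u, ?_⟩
    have : u * y * z + u - 1 = 0 := by
      rw [mul_assoc, ha]; rw [mul_add, mul_one] at hu; rw [add_comm, hu, sub_self]
    rw [this]; exact TwoSidedIdeal.zero_mem _
  · intro z hz
    exact ⟨1, le_rfl, by simpa using hz⟩
end

section
/- Let R be a ring and u a unit of R. Then u is a strongly √J-clean element (i.e., u = e + z with e idempotent, z ∈ √J(R), and ez = ze) if and only if u = 1 + z for some z ∈ √J(R). -/
theorem unit_stronglySqrtJClean_iff (R : Type*) [Ring R] (u : R) (hu : IsUnit u) :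
    (∃ e z : R, IsIdempotentElem e ∧ z ∈ sqrtJ R ∧ u = e + z ∧ e * z = z * e) ↔
      ∃ z ∈ sqrtJ R, u = 1 + z := by
  constructor
  · rintro ⟨e, z, he, ⟨n, hn, hz⟩, hue, hc⟩
    have hf : IsIdempotentElem (1 - e) := he.one_sub
    have hce : Commute e z := hc
    have hcz : Commute (1 - e) z := (Commute.one_left z).sub_left hce
    have hfe : (1 - e) * e = 0 := by rw [sub_mul, one_mul, he.eq, sub_self]
    have hfu : (1 - e) * u = (1 - e) * z := by rw [hue, mul_add, hfe, zero_add]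
    have hcu : Commute (1 - e) u := by
      rw [hue]
      exact ((Commute.one_left e).sub_left (Commute.refl e)).add_right hcz
    have hpow : (1 - e) * u ^ n = (1 - e) * z ^ n := by
      have h : ((1 - e) * u) ^ n = ((1 - e) * z) ^ n := by rw [hfu]
      rw [hcu.mul_pow, hcz.mul_pow, hf.pow_eq (by omega)] at h
      exact h
    obtain ⟨v, hv⟩ := hu.pow n
    have hJ : (1 - e) ∈ (⊥ : TwoSidedIdeal R).jacobson := by
      have h1 : (1 - e) = (1 - e) * z ^ n * (↑v⁻¹ : R) := by
        rw [← hpow, ← hv, mul_assoc, Units.mul_inv, mul_one]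
      rw [h1]
      exact TwoSidedIdeal.mul_mem_right _ _ _ (TwoSidedIdeal.mul_mem_left _ _ _ hz)
    obtain ⟨w, hw⟩ := TwoSidedIdeal.mem_jacobson_iff.1 hJ (-1)
    rw [TwoSidedIdeal.mem_bot] at hw
    have hwe : w * e = 1 := by
      rw [← sub_eq_zero, ← hw]
      noncomm_ring
    have he1 : e = 1 := by
      calc e = (w * e) * e := by rw [hwe, one_mul]
        _ = 1 := by rw [mul_assoc, he.eq, hwe]
    exact ⟨z, ⟨n, hn, hz⟩, by rw [hue, he1]⟩
  · rintro ⟨z, hz, h⟩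
    exact ⟨1, z, IsIdempotentElem.one, hz, h, by rw [one_mul, mul_one]⟩
end

section
/- Every strongly √J-clean ring is a √JU ring; that is, if R is strongly √J-clean, then every unit of R lies in 1 + √J(R). -/
theorem sqrtJU_of_stronglySqrtJClean (R : Type*) [Ring R]
    (h : IsStronglySqrtJCleanRing R) :
    ∀ u : R, IsUnit u → ∃ z ∈ sqrtJ R, u = 1 + z := by
  rintro u ⟨v, rfl⟩
  obtain ⟨e, z, he, ⟨n, hn, hz⟩, hu, hc⟩ := h v
  have he' : e * e = e := he
  have hf : (1 - e) * (v : R) = (1 - e) * z := by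
    rw [hu]; simp only [mul_add, sub_mul, one_mul, he']; abel
  have hcv : Commute z (v : R) := by
    rw [hu]; exact Commute.add_right (Eq.symm hc) (Commute.refl z)
  have hp : ∀ m : ℕ, (1 - e) * (v : R) ^ m = (1 - e) * z ^ m := by
    intro m
    induction m with
    | zero => simp
    | succ k ih =>
      rw [pow_succ, ← mul_assoc, ih, mul_assoc, (hcv.pow_left k).eq, ← mul_assoc, hf, mul_assoc,
        ← pow_succ']
  have hJ : (1 - e) ∈ (⊥ : TwoSidedIdeal R).jacobson := by
    have h1 := TwoSidedIdeal.mul_mem_right _ _ (((v ^ n)⁻¹ : Rˣ) : R)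
      (TwoSidedIdeal.mul_mem_left _ (1 - e) _ hz)
    rw [← hp n, ← Units.val_pow_eq_pow_val, mul_assoc, Units.mul_inv, mul_one] at h1
    exact h1
  have h0 : 1 - e = 0 := by
    rw [TwoSidedIdeal.mem_jacobson_iff] at hJ
    obtain ⟨y, hy⟩ := hJ (-1)
    have hy' : y * e = 1 := by
      have : y * -1 * (1 - e) + y - 1 = 0 := (TwoSidedIdeal.mem_bot R).mp hy
      rw [← sub_eq_zero, ← this]; noncomm_ring
    calc 1 - e = y * e * (1 - e) := by rw [hy', one_mul]
      _ = y * (e - e * e) := by noncomm_ring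
      _ = 0 := by rw [he', sub_self, mul_zero]
  exact ⟨z, ⟨n, hn, hz⟩, by rw [hu, ← sub_eq_zero.mp h0]⟩
end

section
/- A semisimple ring R is a strongly √J-clean ring if and only if R is isomorphic to a finite direct product 𝔽₂ × 𝔽₂ × ⋯ × 𝔽₂ of copies of the field with two elements. -/
lemma aux_pow {S : Type*} [Ring S] (e z : S) (he : IsIdempotentElem e) (hc : e * z = z * e)
    (n : ℕ) (hz : z ^ n = 0) : ((e + z) * (e + z) - (e + z)) ^ n = 0 := by
  have h1 : (e + z) * (e + z) - (e + z) = z * (2 * e + z - 1) := by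
    have : e * e = e := he
    simp only [mul_add, add_mul, mul_sub, this, two_mul, hc, mul_one]
    abel
  have hcc : Commute z e := hc.symm
  have h2 : Commute z (2 * e + z - 1) :=
    (((Commute.ofNat_right z 2).mul_right hcc).add_right (Commute.refl z)).sub_right
      (Commute.one_right z)
  rw [h1, h2.mul_pow, hz, zero_mul]

lemma aux_dim (d : ℕ) [NeZero d] (D : Type*) [DivisionRing D]
    (h : ∀ a : Matrix (Fin d) (Fin d) D, ∃ n : ℕ, 1 ≤ n ∧ (a * a - a) ^ n = 0) :
    d = 1 := by
  by_contra hd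
  have hd0 : d ≠ 0 := NeZero.ne d
  let i : Fin d := ⟨0, by omega⟩
  let j : Fin d := ⟨1, by omega⟩
  have hij : i ≠ j := by simp [i, j]
  let s : Fin d → Fin d → Matrix (Fin d) (Fin d) D := fun x y => Matrix.single x y 1
  obtain ⟨n, hn, h0⟩ := h (s i j + s j i + s j j)
  have hE : (s i j + s j i + s j j) * (s i j + s j i + s j j) - (s i j + s j i + s j j)
      = s i i + s j j := by
    simp [s, mul_add, add_mul, hij, hij.symm]
    abel
  have hI : IsIdempotentElem (s i i + s j j) := by
    simp [IsIdempotentElem, s, mul_add, add_mul, hij, hij.symm]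
  rw [hE, hI.pow_eq (by omega)] at h0
  have := congrFun (congrFun h0 i) i
  simp [s, hij.symm, Matrix.single] at this

lemma aux_div (D : Type*) [DivisionRing D] (h : ∀ a : D, a = 0 ∨ a = 1) :
    Nonempty (D ≃+* ZMod 2) := by
  have h2 : (2 : D) = 0 := by
    rcases h 2 with h | h
    · exact h
    · exfalso
      rw [← one_add_one_eq_two] at h
      exact one_ne_zero (α := D) (by simpa using h)
  haveI : CharP D 2 := CharTwo.of_one_ne_zero_of_two_eq_zero one_ne_zero h2
  refine ⟨(RingEquiv.ofBijective (ZMod.castHom (dvd_refl 2) D) ⟨RingHom.injective _, ?_⟩).symm⟩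
  intro a
  rcases h a with rfl | rfl
  · exact ⟨0, map_zero _⟩
  · exact ⟨1, map_one _⟩

lemma aux_block (d : ℕ) [NeZero d] (D : Type*) [DivisionRing D]
    (h : ∀ a : Matrix (Fin d) (Fin d) D, ∃ n : ℕ, 1 ≤ n ∧ (a * a - a) ^ n = 0) :
    Nonempty (Matrix (Fin d) (Fin d) D ≃+* ZMod 2) := by
  obtain rfl := aux_dim d D h
  let f : Matrix (Fin 1) (Fin 1) D ≃+* D := Matrix.uniqueRingEquiv
  obtain ⟨g⟩ := aux_div D (by
    intro a
    obtain ⟨n, hn, h0⟩ := h (f.symm a)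
    have := congrArg f h0
    simp only [map_pow, map_sub, map_mul, f.apply_symm_apply, map_zero] at this
    have h1 := eq_zero_of_pow_eq_zero this
    rw [show a * a - a = a * (a - 1) by rw [mul_sub, mul_one]] at h1
    rcases mul_eq_zero.1 h1 with h | h
    · exact Or.inl h
    · exact Or.inr (sub_eq_zero.1 h))
  exact ⟨f.trans g⟩

lemma aux_jac (R : Type*) [Ring R] [IsSemisimpleRing R] (z : R)
    (hz : z ∈ (⊥ : TwoSidedIdeal R).jacobson) : z = 0 := by
  have h := IsSemisimpleRing.jacobson_eq_bot R
  have : z ∈ Ring.jacobson R := by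
    rw [Ring.jacobson_eq_sInf_isMaximal]
    rw [Ideal.mem_sInf]
    intro I hI
    have hz' : z ∈ TwoSidedIdeal.asIdeal (⊥ : TwoSidedIdeal R).jacobson := hz
    rw [TwoSidedIdeal.asIdeal_jacobson, Ideal.jacobson, Ideal.mem_sInf] at hz'
    refine hz' ⟨fun x hx => ?_, hI⟩
    have : x = 0 := by simpa using hx
    rw [this]
    exact I.zero_mem
  rw [h] at this
  simpa using this

theorem semisimple_stronglySqrtJClean_iff (R : Type*) [Ring R]
    [IsSemisimpleRing R] :
    IsStronglySqrtJCleanRing R ↔ ∃ n : ℕ, Nonempty (R ≃+* (Fin n → ZMod 2)) := by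
  constructor
  · intro h
    have key : ∀ a : R, ∃ n : ℕ, 1 ≤ n ∧ (a * a - a) ^ n = 0 := by
      intro a
      obtain ⟨e, z, he, ⟨n, hn, hz⟩, rfl, hc⟩ := h a
      exact ⟨n, hn, aux_pow e z he hc n (aux_jac R _ hz)⟩
    obtain ⟨n, D, d, _, hd, ⟨f⟩⟩ := IsSemisimpleRing.exists_ringEquiv_pi_matrix_divisionRing R
    have hb : ∀ i, Nonempty (Matrix (Fin (d i)) (Fin (d i)) (D i) ≃+* ZMod 2) := by
      intro i
      haveI := hd i
      apply aux_block
      intro a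
      obtain ⟨m, hm, h0⟩ := key (f.symm (Function.update 0 i a))
      refine ⟨m, hm, ?_⟩
      have := congrFun (congrArg f h0) i
      simpa only [map_pow, map_sub, map_mul, f.apply_symm_apply, map_zero, Pi.pow_apply,
        Pi.sub_apply, Pi.mul_apply, Function.update_self, Pi.zero_apply] using this
    exact ⟨n, ⟨f.trans (RingEquiv.piCongrRight fun i => (hb i).some)⟩⟩
  · rintro ⟨n, ⟨f⟩⟩ a
    refine ⟨a, 0, ?_, ⟨1, le_rfl, ?_⟩, by simp, by simp⟩
    · apply f.injective
      rw [map_mul]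
      ext i
      have : ∀ x : ZMod 2, x * x = x := by decide
      rw [Pi.mul_apply, this]
    · rw [pow_one]
      exact TwoSidedIdeal.zero_mem _
end

section
/- A strongly √J-clean ring R is a local ring if and only if R has no idempotents other than 0 and 1. -/
theorem isUnit_one_sub_of_memJ {R : Type*} [Ring R] {w : R}
    (hw : w ∈ (⊥ : TwoSidedIdeal R).jacobson) : IsUnit (1 - w) := by
  have key : ∀ v : R, v ∈ (⊥ : TwoSidedIdeal R).jacobson → ∃ t, t * (1 - v) = 1 := by
    intro v hv
    obtain ⟨t, ht⟩ := TwoSidedIdeal.mem_jacobson_iff.mp hv (-1)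
    rw [TwoSidedIdeal.mem_bot, sub_eq_zero] at ht
    refine ⟨t, ?_⟩
    refine Eq.trans ?_ ht
    noncomm_ring
  obtain ⟨t, ht⟩ := key w hw
  have htw : -(t * w) ∈ (⊥ : TwoSidedIdeal R).jacobson :=
    TwoSidedIdeal.neg_mem _ (TwoSidedIdeal.mul_mem_left _ _ _ hw)
  obtain ⟨s, hs⟩ := key _ htw
  have h1 : 1 - -(t * w) = t := by
    have h3 : t - t * w = 1 := by rwa [mul_sub, mul_one] at ht
    rw [sub_neg_eq_add]
    exact (sub_eq_iff_eq_add.mp h3).symm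
  rw [h1] at hs
  have h2 : s = 1 - w := left_inv_eq_right_inv hs ht
  rw [h2] at hs
  exact ⟨⟨1 - w, t, hs, ht⟩, rfl⟩

theorem isUnit_one_sub_of_mem_sqrtJ {R : Type*} [Ring R] {z : R}
    (hz : z ∈ sqrtJ R) : IsUnit (1 - z) := by
  obtain ⟨n, -, hz⟩ := hz
  have hu := isUnit_one_sub_of_memJ hz
  have e1 : (1 - z) * (∑ i ∈ Finset.range n, z ^ i) = 1 - z ^ n := mul_neg_geom_sum z n
  have e2 : (∑ i ∈ Finset.range n, z ^ i) * (1 - z) = 1 - z ^ n := geom_sum_mul_neg z n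
  have hc : Commute (1 - z) (∑ i ∈ Finset.range n, z ^ i) := e1.trans e2.symm
  rw [← e1, hc.isUnit_mul_iff] at hu
  exact hu.1

theorem neg_mem_sqrtJ {R : Type*} [Ring R] {z : R}
    (hz : z ∈ sqrtJ R) : -z ∈ sqrtJ R := by
  obtain ⟨n, hn, hz⟩ := hz
  refine ⟨n, hn, ?_⟩
  rw [neg_pow]
  exact TwoSidedIdeal.mul_mem_left _ _ _ hz

theorem stronglySqrtJClean_local_iff (R : Type*) [Ring R] [Nontrivial R]
    (h : IsStronglySqrtJCleanRing R) :
    IsLocalRing R ↔ ∀ e : R, IsIdempotentElem e → e = 0 ∨ e = 1 := by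
  constructor
  · intro hl e he
    have h0 : e * (1 - e) = 0 := by rw [mul_sub, mul_one, he.eq, sub_self]
    rcases hl.isUnit_or_isUnit_of_add_one (add_sub_cancel e 1) with hu | hu
    · right
      exact (sub_eq_zero.mp (hu.mul_right_eq_zero.mp h0)).symm
    · left
      exact hu.mul_left_eq_zero.mp h0
  · intro hi
    refine ⟨?_⟩
    intro a b hab
    obtain ⟨e, z, he, hz, rfl, -⟩ := h a
    rcases hi e he with rfl | rfl
    · right
      have : b = 1 - z := by rw [← hab]; abel
      rw [this]
      exact isUnit_one_sub_of_mem_sqrtJ hz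
    · left
      have := isUnit_one_sub_of_mem_sqrtJ (neg_mem_sqrtJ hz)
      rwa [sub_neg_eq_add] at this
end

section
/- If R is a strongly √J-clean ring, then for every element r ∈ R one has r² − r ∈ √J(R). -/
theorem sq_sub_self_mem_sqrtJ (R : Type*) [Ring R]
    (h : IsStronglySqrtJCleanRing R) (r : R) : r ^ 2 - r ∈ sqrtJ R := by
  obtain ⟨e, z, he, ⟨n, hn, hz⟩, rfl, hc⟩ := h r
  refine ⟨n, hn, ?_⟩
  have he' : e * e = e := he
  have hfac : (e + z) ^ 2 - (e + z) = z * (e + e + z - 1) := by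
    have : (e + z) ^ 2 - (e + z) = e * e + e * z + z * e + z * z - e - z := by noncomm_ring
    rw [this, he', hc]
    noncomm_ring
  have hcz : Commute z e := hc.symm
  have hcomm : Commute z (e + e + z - 1) :=
    ((hcz.add_right hcz).add_right (Commute.refl z)).sub_right (Commute.one_right z)
  rw [hfac, hcomm.mul_pow]
  exact TwoSidedIdeal.mul_mem_right _ _ _ hz
end

section
/- If R is a uniquely √J-clean ring, then every idempotent of R is central. -/
theorem idempotents_central_of_uniquelySqrtJClean (R : Type*) [Ring R]
    (h : IsUniquelySqrtJCleanRing R) :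
    ∀ e : R, IsIdempotentElem e → ∀ x : R, e * x = x * e := by
  have key : ∀ e n : R, IsIdempotentElem e → IsIdempotentElem (e + n) → n * n = 0 → n = 0 := by
    intro e n he hf hn
    have h0 : (0 : R) ∈ sqrtJ R := ⟨1, le_rfl, by
      rw [pow_one]; exact zero_mem _⟩
    have h1 : n ∈ sqrtJ R := ⟨2, by norm_num, by
      rw [pow_two, hn]; exact zero_mem _⟩
    have := (h (e + n)).unique (y₁ := (e + n, 0)) (y₂ := (e, n))
      ⟨hf, h0, (add_zero _).symm⟩ ⟨he, h1, rfl⟩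
    exact (congrArg Prod.snd this).symm
  intro e he x
  have hee : e * e = e := he
  have hl : ∀ y : R, e * (e * y) = e * y := fun y => by rw [← mul_assoc, hee]
  have a1 : e * x - e * x * e = 0 := by
    apply key e _ he
    · unfold IsIdempotentElem
      simp only [mul_add, add_mul, mul_sub, sub_mul, mul_assoc, hee, hl]
      abel
    · simp only [mul_sub, sub_mul, mul_assoc, hee, hl]
      abel
  have a2 : x * e - e * x * e = 0 := by
    apply key e _ he
    · unfold IsIdempotentElem
      simp only [mul_add, add_mul, mul_sub, sub_mul, mul_assoc, hee, hl]
      abel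
    · simp only [mul_sub, sub_mul, mul_assoc, hee, hl]
      abel
  rw [sub_eq_zero.mp a1, sub_eq_zero.mp a2]
end

section
/- A ring R is a uniquely √J-clean ring if and only if R is a √J-clean ring in which every idempotent is central. -/
theorem idem_jac_eq_zero {R : Type*} [Ring R] {p : R} (hp : p * p = p)
    (h : p ∈ (⊥ : TwoSidedIdeal R).jacobson) : p = 0 := by
  rw [TwoSidedIdeal.mem_jacobson_iff] at h
  obtain ⟨z, hz⟩ := h (-1)
  rw [TwoSidedIdeal.mem_bot] at hz
  have h1 : (z * -1 * p + z - 1) * p = 0 := by rw [hz, zero_mul]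
  have h2 : (z * -1 * p + z - 1) * p = -(z * (p * p)) + z * p - p := by noncomm_ring
  rw [h2, hp] at h1
  simpa using h1

theorem sq_zero_mem {R : Type*} [Ring R] {z : R} (h : z * z = 0) : z ∈ sqrtJ R := by
  refine ⟨2, by norm_num, ?_⟩
  rw [pow_two, h]
  exact TwoSidedIdeal.zero_mem _

theorem uniquely_idem {R : Type*} [Ring R] (H : IsUniquelySqrtJCleanRing R) {e y : R}
    (he : e * e = e) (hy : y * y = 0) (h : (e + y) * (e + y) = e + y) : y = 0 := by
  have := (H (e + y)).unique (y₁ := (e + y, 0)) (y₂ := (e, y))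
    ⟨h, sq_zero_mem (by simp), by simp⟩ ⟨he, sq_zero_mem hy, rfl⟩
  exact (Prod.ext_iff.1 this).2.symm

theorem uniquelySqrtJClean_iff_sqrtJClean_central_idempotents (R : Type*) [Ring R] :
    IsUniquelySqrtJCleanRing R ↔
      (IsSqrtJCleanRing R ∧ ∀ e : R, IsIdempotentElem e → ∀ x : R, e * x = x * e) := by
  constructor
  · intro H
    refine ⟨fun a => ?_, fun e he x => ?_⟩
    · obtain ⟨p, hp, -⟩ := H a
      exact ⟨p.1, p.2, hp⟩
    · have he' : e * e = e := he
      have he2 : ∀ t, e * (e * t) = e * t := fun t => by rw [← mul_assoc, he']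
      have h1 : e * x - e * x * e = 0 := by
        apply uniquely_idem H he' <;>
        · simp only [mul_add, add_mul, mul_sub, sub_mul, mul_assoc, he', he2]
          abel
      have h2 : x * e - e * x * e = 0 := by
        apply uniquely_idem H he' <;>
        · simp only [mul_add, add_mul, mul_sub, sub_mul, mul_assoc, he', he2]
          abel
      rw [sub_eq_zero.1 h1, sub_eq_zero.1 h2]
  · rintro ⟨H, hc⟩ a
    obtain ⟨e, z, he, ⟨n, hn, hz⟩, ha⟩ := H a
    refine ⟨(e, z), ⟨he, ⟨n, hn, hz⟩, ha⟩, ?_⟩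
    rintro ⟨f, w⟩ ⟨hf, ⟨m, hm, hw⟩, ha'⟩
    simp only at hf hw ha'
    have hzw : w = e + z - f := by rw [← ha, ha']; abel
    have hcomm : Commute z w := by
      rw [hzw]
      have h1 : Commute z e := (hc e he z).symm
      have h2 : Commute z f := (hc f hf z).symm
      exact (h1.add_right (Commute.refl z)).sub_right h2
    have hef : e * f = f * e := hc e he f
    have he' : e * e = e := he
    have hf' : f * f = f := hf
    obtain ⟨g, hg⟩ : ∃ g, g = w - z := ⟨_, rfl⟩
    have hg' : g = e - f := by rw [hg, hzw]; abel
    have hfe : ∀ t, f * (e * t) = e * (f * t) := fun t => by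
      rw [← mul_assoc, ← hef, mul_assoc]
    have he2 : ∀ t, e * (e * t) = e * t := fun t => by rw [← mul_assoc, he']
    have hf2 : ∀ t, f * (f * t) = f * t := fun t => by rw [← mul_assoc, hf']
    have g3 : g * (g * g) = g := by
      rw [hg']
      simp only [mul_sub, sub_mul, mul_assoc, he', hf', ← hef, hfe, he2, hf2]
      abel
    have gi : (g * g) * (g * g) = g * g := by rw [mul_assoc, g3]
    let J := (⊥ : TwoSidedIdeal R).jacobson
    have key : ∀ x : R, J.ringCon.mk' x = 0 ↔ x ∈ J := fun x => by
      rw [← TwoSidedIdeal.mem_ker, TwoSidedIdeal.ker_ringCon_mk']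
    have nz : IsNilpotent (J.ringCon.mk' z) := ⟨n, by rw [← map_pow, key]; exact hz⟩
    have nw : IsNilpotent (J.ringCon.mk' w) := ⟨m, by rw [← map_pow, key]; exact hw⟩
    have ng : IsNilpotent (J.ringCon.mk' g) := by
      rw [hg, map_sub]
      exact (hcomm.symm.map J.ringCon.mk').isNilpotent_sub nw nz
    obtain ⟨k, hk⟩ := ng
    rw [← map_pow, key] at hk
    have gk : ∀ k : ℕ, (g * g) * (g ^ k * g ^ k) = g * g := by
      intro k
      induction k with
      | zero => simp
      | succ k ih =>
        calc (g * g) * (g ^ (k+1) * g ^ (k+1)) = ((g * g) * (g ^ k * g ^ k)) * (g * g) := by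
              simp only [← pow_two, ← pow_add, ← pow_mul]; congr 1; ring
          _ = g * g := by rw [ih, gi]
    have hJ : g * g ∈ J := by
      rw [← gk k]
      exact J.mul_mem_left _ _ (J.mul_mem_left _ _ hk)
    have g0 : g = 0 := by rw [← g3, idem_jac_eq_zero gi hJ, mul_zero]
    have h1 : w = z := sub_eq_zero.1 (hg ▸ g0)
    have h2 : e = f := sub_eq_zero.1 (hg' ▸ g0)
    rw [h1, h2]
end

section
/- A ring R is a uniquely clean ring if and only if R is a uniquely √J-clean ring. -/
theorem exists_linv_of_memJ {R : Type*} [Ring R] {x : R}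
    (h : x ∈ (⊥ : TwoSidedIdeal R).jacobson) : ∃ z, z * (1 + x) = 1 := by
  obtain ⟨z, hz⟩ := TwoSidedIdeal.mem_jacobson_iff.1 h 1
  rw [TwoSidedIdeal.mem_bot] at hz
  refine ⟨z, ?_⟩
  rw [← sub_eq_zero, ← hz]; noncomm_ring

theorem isUnit_of_memJ {R : Type*} [Ring R] {x : R}
    (h : x ∈ (⊥ : TwoSidedIdeal R).jacobson) : IsUnit (1 + x) := by
  obtain ⟨z, hz⟩ := exists_linv_of_memJ h
  have hm : -(z * x) ∈ (⊥ : TwoSidedIdeal R).jacobson :=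
    TwoSidedIdeal.neg_mem _ (TwoSidedIdeal.mul_mem_left _ _ _ h)
  obtain ⟨t, ht⟩ := exists_linv_of_memJ hm
  have hz' : 1 + -(z * x) = z := by
    rw [← hz]; noncomm_ring
  rw [hz'] at ht
  have : t = 1 + x := by
    calc t = t * (z * (1 + x)) := by rw [hz, mul_one]
      _ = 1 + x := by rw [← mul_assoc, ht, one_mul]
  rw [this] at ht
  exact ⟨⟨1 + x, z, ht, hz⟩, rfl⟩

theorem isUnit_of_mem_sqrtJ {R : Type*} [Ring R] {x : R}
    (h : x ∈ sqrtJ R) : IsUnit (1 + x) := by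
  obtain ⟨n, hn, hx⟩ := h
  have hm : -((-x) ^ n) ∈ (⊥ : TwoSidedIdeal R).jacobson := by
    rw [neg_pow]
    exact TwoSidedIdeal.neg_mem _ (TwoSidedIdeal.mul_mem_left _ _ _ hx)
  have hu := isUnit_of_memJ hm
  have e1 := mul_neg_geom_sum (-x) n
  have e2 := geom_sum_mul_neg (-x) n
  have hc : Commute (1 - -x) (∑ i ∈ Finset.range n, (-x) ^ i) := e1.trans e2.symm
  rw [← sub_eq_add_neg, ← e1, hc.isUnit_mul_iff] at hu
  simpa using hu.1

theorem idem_memJ {R : Type*} [Ring R] {g : R} (hg : g * g = g)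
    (h : g ∈ (⊥ : TwoSidedIdeal R).jacobson) : g = 0 := by
  obtain ⟨z, hz⟩ := exists_linv_of_memJ (TwoSidedIdeal.neg_mem _ h)
  calc g = z * (1 + -g) * g := by rw [hz, one_mul]
    _ = z * (g - g * g) := by noncomm_ring
    _ = 0 := by rw [hg]; simp

theorem central_aux {R : Type*} [Ring R]
    (H : ∀ e n : R, e * e = e → (e + n) * (e + n) = e + n → n * n = 0 → n = 0)
    {e : R} (he : e * e = e) (r : R) : e * r = r * e := by
  have he' : (1 - e) * e = 0 := by rw [sub_mul, he]; simp
  have he'' : e * (1 - e) = 0 := by rw [mul_sub, he]; simp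
  have h1 : e * r * (1 - e) = 0 := by
    have q1 : e * (e * r * (1 - e)) = e * r * (1 - e) := by simp only [← mul_assoc, he]
    have q2 : e * r * (1 - e) * e = 0 := by rw [mul_assoc, he', mul_zero]
    have q3 : e * r * (1 - e) * (e * r * (1 - e)) = 0 := by
      rw [← mul_assoc, ← mul_assoc, q2]; simp
    refine H e _ he ?_ q3
    rw [add_mul, mul_add, mul_add, he, q1, q2, q3]; simp
  have h2 : (1 - e) * r * e = 0 := by
    have q1 : e * ((1 - e) * r * e) = 0 := by rw [← mul_assoc, ← mul_assoc, he'']; simp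
    have q2 : (1 - e) * r * e * e = (1 - e) * r * e := by rw [mul_assoc, he]
    have q3 : (1 - e) * r * e * ((1 - e) * r * e) = 0 := by
      rw [mul_assoc _ e, q1, mul_zero]
    refine H e _ he ?_ q3
    rw [add_mul, mul_add, mul_add, he, q1, q2, q3]; simp
  have h3 : e * r = e * r * e := by
    rw [← sub_eq_zero, ← h1]; noncomm_ring
  have h4 : r * e = e * r * e := by
    rw [← sub_eq_zero, ← h2]; noncomm_ring
  rw [h3, ← h4]

theorem sqrtJ_zero_of_sq {R : Type*} [Ring R] {n : R} (h : n * n = 0) : n ∈ sqrtJ R :=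
  ⟨2, by norm_num, by rw [pow_two, h]; exact TwoSidedIdeal.zero_mem _⟩

theorem uc_of_usj {R : Type*} [Ring R] (h : IsUniquelySqrtJCleanRing R) :
    IsUniquelyCleanRing R := by
  have uniq : ∀ e z f w : R, e * e = e → z ∈ sqrtJ R → f * f = f → w ∈ sqrtJ R →
      e + z = f + w → e = f := by
    intro e z f w he hz hf hw hh
    have := (h (e + z)).unique (y₁ := (e, z)) (y₂ := (f, w)) ⟨he, hz, rfl⟩ ⟨hf, hw, hh⟩
    exact congrArg Prod.fst this
  have cen : ∀ e : R, e * e = e → ∀ r, e * r = r * e := by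
    intro e he r
    refine central_aux (fun e n he hen hn => ?_) he r
    have := uniq e n (e + n) 0 he (sqrtJ_zero_of_sq hn) hen
      (sqrtJ_zero_of_sq (by simp)) (by simp)
    simpa using this
  have unit1 : ∀ u : R, IsUnit u → u - 1 ∈ sqrtJ R := by
    intro u hu
    obtain ⟨⟨e, z⟩, ⟨he, hz, hez⟩, -⟩ := h u
    change e * e = e at he
    change z ∈ sqrtJ R at hz
    change u = e + z at hez
    have hg : (1 - e) * (1 - e) = 1 - e := by
      simp [mul_sub, sub_mul, he]
    have h0 : (1 - e) * u = (1 - e) * z := by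
      rw [hez, mul_add, sub_mul 1 e e, he]; simp
    obtain ⟨n, hn, hzn⟩ := hz
    have cu : Commute (1 - e) u := cen _ hg u
    have cz : Commute (1 - e) z := cen _ hg z
    have hgn : (1 - e) ^ n = 1 - e := by
      exact IsIdempotentElem.pow_eq (a := 1 - e) hg (by omega)
    have hp : (1 - e) * u ^ n = (1 - e) * z ^ n := by
      have := congrArg (· ^ n) h0
      simpa [cu.mul_pow, cz.mul_pow, hgn] using this
    obtain ⟨v, hv⟩ := hu.pow n
    have hgJ : 1 - e ∈ (⊥ : TwoSidedIdeal R).jacobson := by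
      have : 1 - e = (1 - e) * z ^ n * (↑v⁻¹ : R) := by
        rw [← hp, ← hv]; simp
      rw [this]
      exact TwoSidedIdeal.mul_mem_right _ _ _ (TwoSidedIdeal.mul_mem_left _ _ _ hzn)
    have h1 := idem_memJ hg hgJ
    have : e = 1 := (sub_eq_zero.1 h1).symm
    rw [hez, this]
    exact ⟨n, hn, by simpa using hzn⟩
  intro a
  obtain ⟨⟨e, z⟩, ⟨he, hz, hez⟩, -⟩ := h a
  change e * e = e at he
  change z ∈ sqrtJ R at hz
  change a = e + z at hez
  have hs : (2 * e - 1) * (2 * e - 1) = 1 := by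
    have : (2 * e - 1) * (2 * e - 1) = 4 * (e * e) - 4 * e + 1 := by noncomm_ring
    rw [this, he]; simp
  refine ⟨(1 - e, 2 * e - 1 + z), ⟨?_, ?_, ?_⟩, ?_⟩
  · change (1 - e) * (1 - e) = 1 - e
    simp [mul_sub, sub_mul, he]
  · change IsUnit (2 * e - 1 + z)
    have : 2 * e - 1 + z = (2 * e - 1) * (1 + (2 * e - 1) * z) := by
      rw [mul_add, ← mul_assoc, hs]; simp
    rw [this]
    refine IsUnit.mul ⟨⟨_, _, hs, hs⟩, rfl⟩ (isUnit_of_mem_sqrtJ ?_)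
    obtain ⟨n, hn, hzn⟩ := hz
    refine ⟨n, hn, ?_⟩
    have hc : Commute (2 * e - 1) z := by
      change (2 * e - 1) * z = z * (2 * e - 1)
      rw [sub_mul, mul_sub, two_mul, add_mul, mul_add, cen e he z]; simp
    rw [hc.mul_pow]
    exact TwoSidedIdeal.mul_mem_left _ _ _ hzn
  · change a = 1 - e + (2 * e - 1 + z)
    rw [hez]; noncomm_ring
  · rintro ⟨f, v⟩ ⟨hf, hv, hfv⟩
    change f * f = f at hf
    change IsUnit v at hv
    change a = f + v at hfv
    -- compare with the original decomposition shifted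
    have hU : IsUnit (2 * e - 1 + z) := by
      have : 2 * e - 1 + z = (2 * e - 1) * (1 + (2 * e - 1) * z) := by
        rw [mul_add, ← mul_assoc, hs]; simp
      rw [this]
      refine IsUnit.mul ⟨⟨_, _, hs, hs⟩, rfl⟩ (isUnit_of_mem_sqrtJ ?_)
      obtain ⟨n, hn, hzn⟩ := hz
      refine ⟨n, hn, ?_⟩
      have hc : Commute (2 * e - 1) z := by
        change (2 * e - 1) * z = z * (2 * e - 1)
        rw [sub_mul, mul_sub, two_mul, add_mul, mul_add, cen e he z]; simp
      rw [hc.mul_pow]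
      exact TwoSidedIdeal.mul_mem_left _ _ _ hzn
    have hfe : f = 1 - e := by
      refine uniq f (v - 1) (1 - e) (2 * e - 1 + z - 1) hf (unit1 _ hv) ?_ (unit1 _ hU) ?_
      · simp [mul_sub, sub_mul, he]
      · have : f + (v - 1) = a - 1 := by rw [hfv]; abel
        rw [this, hez]; noncomm_ring
    have : v = 2 * e - 1 + z := by
      have : v = a - f := by rw [hfv]; abel
      rw [this, hez, hfe]; noncomm_ring
    rw [hfe, this]

theorem usj_of_uc {R : Type*} [Ring R] (h : IsUniquelyCleanRing R) :
    IsUniquelySqrtJCleanRing R := by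
  have uniq : ∀ e z f w : R, e * e = e → IsUnit z → f * f = f → IsUnit w →
      e + z = f + w → e = f := by
    intro e z f w he hz hf hw hh
    have := (h (e + z)).unique (y₁ := (e, z)) (y₂ := (f, w)) ⟨he, hz, rfl⟩ ⟨hf, hw, hh⟩
    exact congrArg Prod.fst this
  have cen : ∀ e : R, e * e = e → ∀ r, e * r = r * e := by
    intro e he r
    refine central_aux (fun e n he hen hn => ?_) he r
    have hu : IsUnit (1 + n) := isUnit_of_mem_sqrtJ (sqrtJ_zero_of_sq hn)
    have := uniq e (1 + n) (e + n) 1 he hu hen isUnit_one (by abel)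
    simpa using this
  have key : ∀ e u x : R, e * e = e → IsUnit u → x * (1 - u) * e = e → e = 0 := by
    rintro e _ x he ⟨u, rfl⟩ hx
    have hxe : x * ((1 - u) * e) = e := by rw [← mul_assoc, hx]
    set d : R := 1 - u with hd
    have hes : d * x * e * (d * x * e) = d * x * e := by
      calc d * x * e * (d * x * e) = d * x * (e * d) * (x * e) := by simp only [mul_assoc]
        _ = d * (x * d * e) * (x * e) := by rw [cen e he d]; simp only [mul_assoc]
        _ = d * (e * x) * e := by rw [hx]; simp only [mul_assoc]
        _ = d * x * e := by rw [cen e he x]; simp only [mul_assoc, he]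
    have hse : d * x * e = e := by
      symm
      calc e = x * d * (x * d * e) := by rw [hx, hx]
        _ = x * d * x * d * (e * e) := by rw [he]; simp only [mul_assoc]
        _ = x * d * x * (d * e) * e := by simp only [mul_assoc]
        _ = x * (d * x * e) * (d * e) := by
            rw [← cen e he d]
            simp only [mul_assoc]
            rw [cen e he d]
        _ = (d * x * e) * (x * d * e) := by rw [← cen _ hes x]; simp only [mul_assoc]
        _ = d * x * e := by rw [hx, mul_assoc, he]
    have hcd := cen e he d
    have hcx := cen e he x
    have hcu := cen e he u
    have hcv := cen e he (↑u⁻¹ : R)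
    have hg : (1 - e) * (1 - e) = 1 - e := by simp [mul_sub, sub_mul, he]
    have ge : (1 - e) * e = 0 := by rw [sub_mul, he]; simp
    have eg : e * (1 - e) = 0 := by rw [mul_sub, he]; simp
    -- two-sided units glued from the corners
    have glue : ∀ p q : R, p * q * e = e → q * p * e = e →
        IsUnit (p * e + (1 - e)) := by
      intro p q hpq hqp
      have aux : ∀ p q : R, p * q * e = e →
          (p * e + (1 - e)) * (q * e + (1 - e)) = 1 := by
        intro p q hpq
        have t1 : p * e * (q * e) = e := by
          rw [mul_assoc, ← mul_assoc e, cen e he q, mul_assoc q, he, ← mul_assoc, hpq]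
        have t2 : p * e * (1 - e) = 0 := by rw [mul_assoc, eg, mul_zero]
        have t3 : (1 - e) * (q * e) = 0 := by
          rw [← cen e he q, ← mul_assoc, ge, zero_mul]
        rw [add_mul, mul_add, mul_add, t1, t2, t3, hg]; abel
      exact ⟨⟨_, _, aux p q hpq, aux q p hqp⟩, rfl⟩
    have U1 := glue u (↑u⁻¹ : R) (by simp) (by simp)
    have U2 := glue (-d) (-x) (by simpa using hse) (by simpa using hx)
    refine uniq e _ 0 _ he U2 (by simp) U1 ?_
    rw [hd]; noncomm_ring
  have unitJ : ∀ u : R, IsUnit u → u - 1 ∈ (⊥ : TwoSidedIdeal R).jacobson := by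
    intro u hu
    rw [TwoSidedIdeal.mem_jacobson_iff]
    intro y
    obtain ⟨⟨e, w⟩, ⟨he, hw, hew⟩, -⟩ := h (1 + y * (u - 1))
    change e * e = e at he
    change IsUnit w at hw
    change 1 + y * (u - 1) = e + w at hew
    obtain ⟨w, rfl⟩ := hw
    have hwe : (w : R) * e = y * (u - 1) * e := by
      have : (w : R) = 1 + y * (u - 1) - e := by rw [hew]; abel
      rw [this, sub_mul, add_mul, he]; simp
    have h0 : e = 0 := by
      refine key e u (-(↑w⁻¹ * y)) he hu ?_
      calc -(↑w⁻¹ * y) * (1 - u) * e = ↑w⁻¹ * (y * (u - 1) * e) := by noncomm_ring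
        _ = e := by rw [← hwe]; simp
    rw [h0, zero_add] at hew
    refine ⟨↑w⁻¹, ?_⟩
    rw [TwoSidedIdeal.mem_bot]
    calc (↑w⁻¹ : R) * y * (u - 1) + ↑w⁻¹ - 1 = ↑w⁻¹ * (1 + y * (u - 1)) - 1 := by noncomm_ring
      _ = 0 := by rw [hew]; simp
  intro a
  obtain ⟨⟨e, u⟩, ⟨he, hu, heu⟩, -⟩ := h a
  change e * e = e at he
  change IsUnit u at hu
  change a = e + u at heu
  have hg : (1 - e) * (1 - e) = 1 - e := by simp [mul_sub, sub_mul, he]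
  have hz : 2 * e + (u - 1) ∈ sqrtJ R := by
    refine ⟨1, le_rfl, ?_⟩
    rw [pow_one]
    refine TwoSidedIdeal.add_mem _ ?_ (unitJ u hu)
    have := TwoSidedIdeal.mul_mem_right _ _ (-e) (unitJ (-1) isUnit_one.neg)
    convert this using 1
    noncomm_ring
  have ha : a = 1 - e + (2 * e + (u - 1)) := by rw [heu]; noncomm_ring
  refine ⟨(1 - e, 2 * e + (u - 1)), ⟨hg, hz, ha⟩, ?_⟩
  rintro ⟨f, w⟩ ⟨hf, hw, hfw⟩
  change f * f = f at hf
  change w ∈ sqrtJ R at hw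
  change a = f + w at hfw
  have hfe : f = 1 - e := by
    refine uniq f (1 + w) (1 - e) (1 + (2 * e + (u - 1))) hf (isUnit_of_mem_sqrtJ hw) hg
      (isUnit_of_mem_sqrtJ hz) ?_
    have : f + (1 + w) = 1 + a := by rw [hfw]; abel
    rw [this, heu]; noncomm_ring
  have : w = 2 * e + (u - 1) := by
    have : w = a - f := by rw [hfw]; abel
    rw [this, heu, hfe]; noncomm_ring
  rw [hfe, this]

theorem uniquelyClean_iff_uniquelySqrtJClean (R : Type*) [Ring R] :
    IsUniquelyCleanRing R ↔ IsUniquelySqrtJCleanRing R :=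
  ⟨usj_of_uc, uc_of_usj⟩
end

section
/- A ring R is both local and strongly √J-clean if and only if the quotient R/J(R) is isomorphic to the field 𝔽₂ with two elements. -/
theorem aux_mem_jac {R : Type*} [Ring R] {x : R} :
    x ∈ (⊥ : TwoSidedIdeal R).jacobson ↔ ∀ y, ∃ z, z * y * x + z = 1 := by
  rw [TwoSidedIdeal.mem_jacobson_iff]
  simp only [TwoSidedIdeal.mem_bot, sub_eq_zero]

theorem aux_unit {R : Type*} [Ring R] {a : R}
    (h : a - 1 ∈ (⊥ : TwoSidedIdeal R).jacobson) : IsUnit a := by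
  have key : ∀ b : R, b - 1 ∈ (⊥ : TwoSidedIdeal R).jacobson → ∃ z, z * b = 1 := by
    intro b hb
    obtain ⟨z, hz⟩ := aux_mem_jac.1 hb 1
    exact ⟨z, by rw [← hz]; noncomm_ring⟩
  obtain ⟨z, hz⟩ := key a h
  have hz1 : z - 1 ∈ (⊥ : TwoSidedIdeal R).jacobson := by
    have : z - 1 = -(z * (a - 1)) := by rw [mul_sub, hz]; noncomm_ring
    rw [this]
    exact TwoSidedIdeal.neg_mem _ (TwoSidedIdeal.mul_mem_left _ _ _ h)
  obtain ⟨w, hw⟩ := key z hz1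
  have : w = a := by
    calc w = w * (z * a) := by rw [hz, mul_one]
      _ = a := by rw [← mul_assoc, hw, one_mul]
  subst this
  exact ⟨⟨w, z, hw, hz⟩, rfl⟩

theorem aux_idem {R : Type*} [Ring R] [IsLocalRing R] {e : R} (h : e * e = e) :
    e = 0 ∨ e = 1 := by
  rcases IsLocalRing.isUnit_or_isUnit_of_add_one (show e + (1 - e) = 1 by simp) with hu | hu
  · right
    exact hu.mul_left_cancel (by rw [h, mul_one])
  · left
    exact hu.mul_left_cancel (by rw [sub_mul, h]; simp)

theorem aux_nonunit {R : Type*} [Ring R] [IsLocalRing R] {x : R} (h : ¬ IsUnit x) :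
    x ∈ (⊥ : TwoSidedIdeal R).jacobson := by
  rw [aux_mem_jac]
  intro y
  rcases IsLocalRing.isUnit_or_isUnit_of_add_one
    (show -(y * x) + (1 + y * x) = 1 by abel) with hu | hu
  · exfalso
    rw [IsUnit.neg_iff] at hu
    obtain ⟨v, hv⟩ := hu.exists_left_inv
    have hv' : (v * y) * x = 1 := by rw [mul_assoc, hv]
    have hid : (x * (v * y)) * (x * (v * y)) = x * (v * y) := by
      calc _ = x * ((v * y) * x) * (v * y) := by noncomm_ring
        _ = _ := by rw [hv', mul_one]
    rcases aux_idem hid with h0 | h1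
    · have : (1 : R) = 0 := by
        calc (1 : R) = ((v * y) * x) * ((v * y) * x) := by rw [hv', mul_one]
          _ = (v * y) * (x * (v * y)) * x := by noncomm_ring
          _ = 0 := by rw [h0]; simp
      exact one_ne_zero this
    · exact h ⟨⟨x, v * y, h1, hv'⟩, rfl⟩
  · obtain ⟨v, hv⟩ := hu.exists_left_inv
    exact ⟨v, by rw [← hv]; noncomm_ring⟩

theorem aux_one {R : Type*} [Ring R] [Nontrivial R] :
    (1 : R) ∉ (⊥ : TwoSidedIdeal R).jacobson := by
  intro h
  obtain ⟨z, hz⟩ := aux_mem_jac.1 h (-1)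
  simp at hz

theorem aux_zero_iff {R : Type*} [Ring R] (I : TwoSidedIdeal R) (a : R) :
    I.ringCon.mk' a = 0 ↔ a ∈ I := by
  rw [TwoSidedIdeal.mem_iff, ← map_zero I.ringCon.mk']
  exact RingCon.eq _

theorem local_stronglySqrtJClean_iff_quotient_F2 (R : Type*) [Ring R] :
    (IsLocalRing R ∧ IsStronglySqrtJCleanRing R) ↔
      Nonempty ((⊥ : TwoSidedIdeal R).jacobson.ringCon.Quotient ≃+* ZMod 2) := by
  classical
  set J := (⊥ : TwoSidedIdeal R).jacobson with hJ
  constructor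
  · rintro ⟨hl, hc⟩
    have hz : ∀ z ∈ sqrtJ R, z ∈ J := by
      rintro z ⟨n, hn, hzn⟩
      apply aux_nonunit
      intro hu
      obtain ⟨v, hv⟩ := (hu.pow n).exists_left_inv
      exact aux_one (hv ▸ TwoSidedIdeal.mul_mem_left _ v _ hzn)
    have hq : ∀ q : J.ringCon.Quotient, q = 0 ∨ q = 1 := by
      intro q
      obtain ⟨a, rfl⟩ := RingCon.mk'_surjective (c := J.ringCon) q
      obtain ⟨e, z, he, hzz, rfl, -⟩ := hc a
      have h0 := (aux_zero_iff J z).2 (hz z hzz)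
      rw [map_add, h0, add_zero]
      rcases aux_idem he with rfl | rfl
      · left; exact map_zero _
      · right; exact map_one _
    have h01 : (0 : J.ringCon.Quotient) ≠ 1 := by
      intro h
      exact aux_one ((aux_zero_iff J 1).1 (by rw [map_one, h]))
    letI : Fintype J.ringCon.Quotient := ⟨{0, 1}, fun q => by simpa using hq q⟩
    have hcard : Fintype.card J.ringCon.Quotient = 2 := Finset.card_pair h01
    exact ⟨(ZMod.ringEquivOfPrime _ Nat.prime_two hcard).symm⟩
  · rintro ⟨f⟩
    have hm : ∀ a : R, f (J.ringCon.mk' a) = 0 → a ∈ J := by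
      intro a h
      exact (aux_zero_iff J a).1 (f.injective (by rw [h, map_zero]))
    have hm1 : ∀ a : R, f (J.ringCon.mk' a) = 1 → a - 1 ∈ J := by
      intro a h
      apply hm
      rw [map_sub, map_sub, h, map_one, map_one, sub_self]
    have h2 : ∀ t : ZMod 2, t = 0 ∨ t = 1 := by decide
    refine ⟨?_, ?_⟩
    · have : Nontrivial R := by
        refine ⟨0, 1, fun h => ?_⟩
        have : f (J.ringCon.mk' 0) = f (J.ringCon.mk' 1) := by rw [h]
        simp only [map_zero, map_one] at this
        exact absurd this (by decide)
      refine ⟨fun {a b} hab => ?_⟩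
      rcases h2 (f (J.ringCon.mk' a)) with h | h
      · right
        apply aux_unit
        apply hm1
        have := congrArg (fun t => f (J.ringCon.mk' t)) hab
        simp only [map_add] at this
        rwa [h, zero_add, map_one, map_one] at this
      · left
        exact aux_unit (hm1 a h)
    · intro a
      rcases h2 (f (J.ringCon.mk' a)) with h | h
      · exact ⟨0, a, IsIdempotentElem.zero, ⟨1, le_rfl, by simpa using hm a h⟩, by simp, by simp⟩
      · exact ⟨1, a - 1, IsIdempotentElem.one, ⟨1, le_rfl, by simpa using hm1 a h⟩, by simp, by simp⟩
end

section
/- Let D be a division ring and n ≥ 1. The matrix ring Mₙ(D) of n × n matrices over D is a √J-clean ring if and only if D is isomorphic to the field 𝔽₂ with two elements. -/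
lemma two_by_two_aux {D : Type*} [DivisionRing D] (M : Matrix (Fin 2) (Fin 2) D)
    (hM : IsNilpotent M) (h11 : M 1 1 = -1) : M 0 0 = 1 := by
  have hne : M ≠ 0 := by
    rintro rfl
    simp at h11
  obtain ⟨r, hr0, hr⟩ : ∃ r : Fin 2 → D, r ≠ 0 ∧ Matrix.vecMul r M = 0 := by
    have h1 := pow_pred_nilpotencyClass hM
    have h2 : M ^ (nilpotencyClass M - 1) * M = 0 := by
      rw [← pow_succ, Nat.sub_add_cancel (pos_nilpotencyClass_iff.2 hM)]
      exact pow_nilpotencyClass hM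
    obtain ⟨i, hi⟩ : ∃ i, (M ^ (nilpotencyClass M - 1)) i ≠ 0 := by
      by_contra! h
      exact h1 (funext h)
    refine ⟨_, hi, ?_⟩
    have := congrFun h2 i
    exact this
  have e0 := congrFun hr 0
  have e1 := congrFun hr 1
  simp [Matrix.vecMul, dotProduct, Fin.sum_univ_two, h11] at e0 e1
  have e1' : r 1 = r 0 * M 0 1 := by
    rw [← sub_eq_add_neg, sub_eq_zero] at e1; exact e1.symm
  have hr00 : r 0 ≠ 0 := by
    intro h
    apply hr0
    funext i
    fin_cases i
    · exact h
    · simp [e1', h]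
  have e00 : M 0 0 = - (M 0 1 * M 1 0) := by
    apply mul_left_cancel₀ hr00
    rw [e1', mul_assoc] at e0
    rw [mul_neg]
    exact eq_neg_of_add_eq_zero_left e0
  have key : ∀ k : ℕ, (M ^ (k + 1)) 1 1 = -(-(M 1 0) * M 0 1 - 1) ^ k ∧
      (M ^ (k + 1)) 1 0 = (-(M 1 0) * M 0 1 - 1) ^ k * M 1 0 := by
    intro k
    induction k with
    | zero => simp [h11]
    | succ k ih =>
      rw [pow_succ M, Matrix.mul_apply, Matrix.mul_apply, Fin.sum_univ_two, Fin.sum_univ_two,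
        ih.1, ih.2, h11, e00, pow_succ (-(M 1 0) * M 0 1 - 1)]
      constructor <;> noncomm_ring
  obtain ⟨k, hk⟩ := hM
  have hk1 : M ^ (k + 1) = 0 := by rw [pow_succ, hk, zero_mul]
  have h3 := (key k).1
  rw [hk1] at h3
  have h4 : -(M 1 0) * M 0 1 - 1 = 0 := by
    have : (-(M 1 0) * M 0 1 - 1) ^ k = 0 := by
      simpa using h3.symm
    exact eq_zero_of_pow_eq_zero this
  have h5 : -(M 1 0) * M 0 1 = 1 := sub_eq_zero.1 h4
  have h6 : M 0 1 * -(M 1 0) = 1 := mul_eq_one_comm.1 h5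
  rw [e00, ← mul_neg, h6]

lemma jac_bot_aux {R : Type*} [Ring R] [IsSimpleRing R] {z : R}
    (hz : z ∈ (⊥ : TwoSidedIdeal R).jacobson) : z = 0 := by
  rcases eq_bot_or_eq_top ((⊥ : TwoSidedIdeal R).jacobson) with h | h
  · rw [h] at hz
    simpa using hz
  · exfalso
    have h1 : (1 : R) ∈ (⊥ : TwoSidedIdeal R).jacobson := by rw [h]; trivial
    rw [TwoSidedIdeal.mem_jacobson_iff] at h1
    obtain ⟨w, hw⟩ := h1 (-1)
    simp at hw

lemma forward_aux {D : Type*} [DivisionRing D] {n : ℕ} 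
    (a : D) (ha : a ≠ 0) (E N : Matrix (Fin (n+1)) (Fin (n+1)) D) (hE : IsIdempotentElem E)
    (hN : IsNilpotent N) (h : Matrix.single 0 0 a = E + N) : a = 1 := by
  have hU : IsUnit (1 + N) := hN.isUnit_one_add
  obtain ⟨V, hV⟩ := hU.exists_left_inv
  have h1 : E = V * (Matrix.single 0 0 a * E) := by
    have : (1 + N) * E = Matrix.single 0 0 a * E := by
      rw [h, add_mul, add_mul, hE.eq, one_mul]
    rw [← this, ← mul_assoc, hV, one_mul]
  set v : Fin (n+1) → D := fun i => V i 0 with hv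
  set p : Fin (n+1) → D := fun j => a * E 0 j with hp
  have hEvp : ∀ i j, E i j = v i * p j := by
    intro i j
    conv_lhs => rw [h1]
    rw [Matrix.mul_apply, Finset.sum_eq_single 0]
    · simp [hv, hp]
    · intro b _ hb
      simp [Matrix.single_mul_apply_of_ne, hb]
    · simp
  by_cases hE0 : E = 0
  · exfalso
    rw [hE0, zero_add] at h
    obtain ⟨k, hk⟩ := hN
    have : ∀ k, ((Matrix.single 0 0 a : Matrix (Fin (n+1)) (Fin (n+1)) D) ^ k) 0 0 = a ^ k := by
      intro k
      induction k with
      | zero => simp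
      | succ k ih => rw [pow_succ, pow_succ, Matrix.mul_single_apply_same, ih]
    have h2 := this k
    rw [h, hk] at h2
    exact pow_ne_zero k ha h2.symm
  have ht : ∑ k, p k * v k = 1 := by
    obtain ⟨i, j, hij⟩ : ∃ i j, E i j ≠ 0 := by
      by_contra! h
      exact hE0 (by ext i j; exact h i j)
    have h2 : (E * E) i j = E i j := by rw [hE.eq]
    rw [Matrix.mul_apply] at h2
    have h3 : v i * (∑ k, p k * v k) * p j = v i * 1 * p j := by
      rw [Finset.mul_sum, Finset.sum_mul, mul_one, ← hEvp, ← h2]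
      refine Finset.sum_congr rfl fun k _ => ?_
      rw [hEvp i k, hEvp k j]
      simp only [mul_assoc]
    rw [hEvp] at hij
    exact mul_left_cancel₀ (left_ne_zero_of_mul hij) (mul_right_cancel₀ (right_ne_zero_of_mul hij) h3)
  let B : Matrix (Fin (n+1)) (Fin 2) D := fun i => ![if i = 0 then 1 else 0, v i]
  let C : Matrix (Fin 2) (Fin (n+1)) D := ![fun j => if j = 0 then a else 0, fun j => - p j]
  have hBC : B * C = N := by
    have hN' : N = Matrix.single 0 0 a - E := by rw [h]; abel
    ext i j
    rw [hN', Matrix.mul_apply, Fin.sum_univ_two, Matrix.sub_apply, hEvp]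
    simp [B, C, Matrix.single_apply, sub_eq_add_neg]
    grind
  have hnil : IsNilpotent (C * B) := by
    obtain ⟨k, hk⟩ := hN
    have : ∀ k, (C * B) ^ (k + 1) = C * (B * C) ^ k * B := by
      intro k
      induction k with
      | zero => simp
      | succ k ih => rw [pow_succ, ih, pow_succ]; simp only [Matrix.mul_assoc]
    exact ⟨k + 1, by rw [this, hBC, hk]; simp⟩
  have := two_by_two_aux (C * B) hnil (by
    rw [Matrix.mul_apply]
    simp [B, C, ht])
  rw [Matrix.mul_apply] at this
  simpa [B, C] using this

lemma forward_main {D : Type*} [DivisionRing D] (n : ℕ) (hn : 1 ≤ n)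
    (H : IsSqrtJCleanRing (Matrix (Fin n) (Fin n) D)) : Nonempty (D ≃+* ZMod 2) := by
  obtain ⟨n, rfl⟩ : ∃ m, n = m + 1 := ⟨n - 1, by omega⟩
  have key : ∀ a : D, a = 0 ∨ a = 1 := by
    intro a
    by_cases ha : a = 0
    · exact Or.inl ha
    right
    obtain ⟨E, N, hE, ⟨k, -, hk⟩, h⟩ := H (Matrix.single 0 0 a)
    exact forward_aux a ha E N hE ⟨k, jac_bot_aux hk⟩ h
  have h2 : (2 : D) = 0 := by
    rcases key 2 with h | h
    · exact h
    · exfalso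
      have : (1 : D) + 1 = 1 := by rw [one_add_one_eq_two, h]
      simp at this
  have : CharP D 2 := CharTwo.of_one_ne_zero_of_two_eq_zero one_ne_zero h2
  refine ⟨(RingEquiv.ofBijective (ZMod.castHom (dvd_refl 2) D) ⟨ZMod.castHom_injective D, ?_⟩).symm⟩
  intro a
  rcases key a with h | h
  · exact ⟨0, by simp [h]⟩
  · exact ⟨1, by simp [h]⟩

lemma nilclean_block {F V : Type*} [Field F] [AddCommGroup V] [Module F V]
    (T : Module.End F V) (p q : Submodule F V) (hpq : IsCompl p q)
    (hT : ∀ x ∈ p, T x ∈ p)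
    (h1 : ∀ S : Module.End F p, ∃ E N : Module.End F p, IsIdempotentElem E ∧ IsNilpotent N ∧ (S = T.restrict hT → S = E + N))
    (h2 : ∀ S : Module.End F q, ∃ E N : Module.End F q, IsIdempotentElem E ∧ IsNilpotent N ∧ S = E + N) :
    ∃ E N : Module.End F V, IsIdempotentElem E ∧ IsNilpotent N ∧ T = E + N := by
  obtain ⟨E1, N1, hE1, ⟨k, hk⟩, hT1⟩ := h1 (T.restrict hT)
  have hT1 := hT1 rfl
  let P := p.projectionOnto q hpq
  let Q := q.projectionOnto p hpq.symm
  obtain ⟨E2, N2, hE2, ⟨l, hl⟩, hT2⟩ := h2 (Q ∘ₗ T ∘ₗ q.subtype)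
  have hPQ : ∀ x, (P x : V) + Q x = x := fun x =>
    Submodule.projection_add_projection_eq_self hpq x
  have hPp : ∀ x : p, P x = x := fun x => Submodule.projectionOnto_apply_left hpq x
  have hQq : ∀ x : q, Q x = x := fun x => Submodule.projectionOnto_apply_left hpq.symm x
  have hPq : ∀ x : q, P x = 0 := fun x => Submodule.projectionOnto_apply_right hpq x
  have hQp : ∀ x : p, Q x = 0 := fun x => Submodule.projectionOnto_apply_right hpq.symm x
  let E : Module.End F V := p.subtype ∘ₗ E1 ∘ₗ P + q.subtype ∘ₗ E2 ∘ₗ Q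
  have hEa : ∀ x, E x = E1 (P x) + E2 (Q x) := fun x => rfl
  have hNp : ∀ x : p, (T - E) x = N1 x := by
    intro x
    have h := LinearMap.congr_fun hT1 x
    have h' : T x = E1 x + N1 x := congrArg Subtype.val h
    rw [LinearMap.sub_apply, hEa, hPp, hQp, h']
    simp
  have hNQ : ∀ x, Q ((T - E) x) = N2 (Q x) := by
    intro x
    have h := LinearMap.congr_fun hT2 (Q x)
    have h' : Q (T (Q x)) = E2 (Q x) + N2 (Q x) := h
    have h3 : Q (T (P x)) = 0 := hQp ⟨T (P x), hT _ (P x).2⟩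
    have h4 : Q (T x) = E2 (Q x) + N2 (Q x) := by
      conv_lhs => rw [← hPQ x]
      rw [map_add, map_add, h3, h', zero_add]
    rw [LinearMap.sub_apply, map_sub, h4, hEa, map_add, hQp, hQq]
    simp
  refine ⟨E, T - E, ?_, ⟨k + l, ?_⟩, by abel⟩
  · ext x
    change E (E x) = E x
    rw [hEa (E x), hEa x, map_add P, map_add Q, hPp, hPq, hQp, hQq, add_zero, zero_add]
    have h3 : E1 (E1 (P x)) = E1 (P x) := LinearMap.congr_fun hE1 (P x)
    have h4 : E2 (E2 (Q x)) = E2 (Q x) := LinearMap.congr_fun hE2 (Q x)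
    rw [h3, h4]
  · have a1 : ∀ j, ∀ x : p, ((T - E) ^ j) x = (N1 ^ j) x := by
      intro j
      induction j with
      | zero => simp
      | succ j ih => intro x; rw [pow_succ, pow_succ, Module.End.mul_apply, hNp, ih]; rfl
    have a2 : ∀ j, ∀ x, Q (((T - E) ^ j) x) = (N2 ^ j) (Q x) := by
      intro j
      induction j with
      | zero => simp
      | succ j ih => intro x; rw [pow_succ, pow_succ, Module.End.mul_apply, ih, hNQ]; rfl
    ext x
    rw [pow_add, Module.End.mul_apply]
    have h3 := hPQ (((T - E) ^ l) x)
    rw [a2, hl] at h3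
    rw [← h3]
    simp [a1, hk]

lemma nilp_of_gen {F V : Type*} [Field F] [AddCommGroup V] [Module F V] [Module.Finite F V]
    (N : Module.End F V) (Z : Submodule F V) (hZ : Z = N.maxGenEigenspace 0) (h : Z = ⊤) :
    IsNilpotent N := by
  rw [Module.End.isNilpotent_iff_of_finite]
  intro x
  have : x ∈ N.maxGenEigenspace 0 := by rw [← hZ, h]; trivial
  rw [Module.End.mem_maxGenEigenspace] at this
  simpa using this

lemma gen_step {F V : Type*} [Field F] [AddCommGroup V] [Module F V]
    (N : Module.End F V) (x : V) (h : N x ∈ N.maxGenEigenspace 0) :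
    x ∈ N.maxGenEigenspace 0 := by
  rw [Module.End.mem_maxGenEigenspace] at h ⊢
  obtain ⟨k, hk⟩ := h
  refine ⟨k + 1, ?_⟩
  simp only [zero_smul, sub_zero] at hk ⊢
  rw [pow_succ, Module.End.mul_apply, hk]

lemma nilclean_cyclic {V : Type*} [AddCommGroup V] [Module (ZMod 2) V]
    (T : Module.End (ZMod 2) V) (e : ℕ → V) (he : ∀ i, T (e i) = e (i + 1))
    (n : ℕ) (b : Module.Basis (Fin n) (ZMod 2) V) (hb : ∀ i, b i = e i) :
    ∃ E N : Module.End (ZMod 2) V, IsIdempotentElem E ∧ IsNilpotent N ∧ T = E + N := by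
  have hfin : Module.Finite (ZMod 2) V := Module.Finite.of_basis b
  have htop : ∀ Z : Submodule (ZMod 2) V, (∀ i < n, e i ∈ Z) → Z = ⊤ := by
    intro Z hZ
    rw [eq_top_iff, ← b.span_eq, Submodule.span_le]
    rintro _ ⟨i, rfl⟩
    rw [hb]
    exact hZ i i.2
  have hext : ∀ f g : Module.End (ZMod 2) V, (∀ i < n, f (e i) = g (e i)) → f = g := by
    intro f g h
    apply b.ext
    intro i
    rw [hb]
    exact h i i.2
  have hdef : ∀ g : ℕ → V, ∃ f : Module.End (ZMod 2) V, ∀ i < n, f (e i) = g i := by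
    intro g
    refine ⟨b.constr (ZMod 2) (fun i => g i), fun i hi => ?_⟩
    have := b.constr_basis (ZMod 2) (fun i : Fin n => g i) ⟨i, hi⟩
    rwa [hb] at this
  have hex : ∃ k, e n ∈ Submodule.span (ZMod 2) (e '' Set.Iio k) := by
    refine ⟨n, ?_⟩
    have : Submodule.span (ZMod 2) (e '' Set.Iio n) = ⊤ :=
      htop _ fun i hi => Submodule.subset_span ⟨i, hi, rfl⟩
    rw [this]; trivial
  classical
  have hspec := Nat.find_spec hex
  have hle : Nat.find hex ≤ n := by
    apply Nat.find_min'
    have : Submodule.span (ZMod 2) (e '' Set.Iio n) = ⊤ :=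
      htop _ fun i hi => Submodule.subset_span ⟨i, hi, rfl⟩
    rw [this]; trivial
  have hmin := fun m => @Nat.find_min _ _ hex m
  generalize Nat.find hex = k at hspec hle hmin
  rcases k with _ | m
  · -- nilpotent
    refine ⟨0, T, IsIdempotentElem.zero, ?_, by simp⟩
    refine nilp_of_gen T _ rfl (htop _ ?_)
    have hn : e n ∈ T.maxGenEigenspace 0 := by
      have : e n = 0 := by simpa using hspec
      rw [this]; exact zero_mem _
    intro i hi
    exact Nat.decreasingInduction (motive := fun j _ => e j ∈ T.maxGenEigenspace 0)
      (fun j _ h => gen_step _ _ (by rwa [he])) hn hi.le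
  have hm := hmin m (Nat.lt_succ_self m)
  obtain ⟨s, hs, hes⟩ : ∃ s ∈ Submodule.span (ZMod 2) (e '' Set.Iio m), e n = e m + s := by
    have : Set.Iio (m + 1) = insert m (Set.Iio m) := by
      ext i
      simp only [Set.mem_Iio, Set.mem_insert_iff]
      omega
    rw [this, Set.image_insert_eq, Submodule.mem_span_insert] at hspec
    obtain ⟨a, s, hs, h⟩ := hspec
    have ha : a = 0 ∨ a = 1 := (by decide : ∀ a : ZMod 2, a = 0 ∨ a = 1) a
    rcases ha with rfl | rfl
    · exact absurd (by simpa [h] using hs) hm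
    · exact ⟨s, hs, by simpa using h⟩
  rcases Nat.lt_or_ge (m + 1) n with hmn | hmn
  · obtain ⟨E, hE⟩ := hdef fun i => if i < m then 0 else if i + 1 < n then e m
      else e n + e i + e m
    have hE1 : ∀ i < m, E (e i) = 0 := fun i hi => by rw [hE i (by omega), if_pos hi]
    have hE2 : ∀ i, m ≤ i → i + 1 < n → E (e i) = e m := fun i hi hi' => by
      rw [hE i (by omega), if_neg (by omega), if_pos hi']
    obtain ⟨r, rfl⟩ : ∃ r, n = r + 1 := ⟨n - 1, by omega⟩
    have hE3 : E (e r) = e (r + 1) + e r + e m := by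
      rw [hE r (by omega), if_neg (by omega), if_neg (by omega)]
    have hEs : E s = 0 := by
      have : Submodule.span (ZMod 2) (e '' Set.Iio m) ≤ LinearMap.ker E := by
        rw [Submodule.span_le]
        rintro _ ⟨i, hi, rfl⟩
        exact hE1 i hi
      exact this hs
    have hEn : E (e (r + 1)) = e m := by
      rw [hes, map_add, hEs, hE2 m le_rfl hmn, add_zero]
    have two : ∀ x : V, x + x = 0 := ZModModule.add_self
    have hN1 : ∀ i < m, (T - E) (e i) = e (i + 1) := fun i hi => by
      rw [LinearMap.sub_apply, he, hE1 i hi, sub_zero]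
    have hN2 : ∀ i, m ≤ i → i < r → (T - E) (e i) = e (i + 1) + e m := fun i hi hi' => by
      rw [LinearMap.sub_apply, he, hE2 i hi (by omega), ZModModule.sub_eq_add]
    have hN3 : (T - E) (e r) = e r + e m := by
      rw [LinearMap.sub_apply, he, hE3, ZModModule.sub_eq_add, ← add_assoc, ← add_assoc, two,
        zero_add]
    refine ⟨E, T - E, ?_, ?_, by abel⟩
    · apply hext
      intro i hi
      change E (E (e i)) = E (e i)
      rcases lt_or_ge i m with h | h
      · rw [hE1 i h, map_zero]
      rcases lt_or_ge i r with h' | h'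
      · rw [hE2 i h (by omega), hE2 m le_rfl hmn]
      · obtain rfl : i = r := by omega
        rw [hE3, map_add, map_add, hEn, hE3, hE2 m le_rfl hmn, add_right_comm, two, zero_add]
    · refine nilp_of_gen _ _ rfl ?_
      set Z := (T - E).maxGenEigenspace 0 with hZ
      have f1 : e r + e (r - 1) ∈ Z := by
        apply gen_step
        rw [map_add, hN3, hN2 (r - 1) (by omega) (by omega), Nat.sub_add_cancel (by omega), two]
        exact zero_mem _
      have f2 : ∀ j, m ≤ j → j < r → e (j + 1) + e j ∈ Z := by
        intro j hj hjr
        have hle : j ≤ r - 1 := by omega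
        refine Nat.decreasingInduction (n := r - 1)
          (motive := fun j _ => m ≤ j → e (j + 1) + e j ∈ Z) ?_ ?_ hle hj
        · intro j hj ih hmj
          apply gen_step
          rw [map_add, hN2 (j + 1) (by omega) (by omega), hN2 j hmj (by omega),
            add_add_add_comm, two, add_zero]
          exact ih (by omega)
        · intro _
          rwa [Nat.sub_add_cancel (by omega)]
      have f3 : e m ∈ Z := by
        apply gen_step
        rw [hN2 m le_rfl (by omega)]
        exact f2 m le_rfl (by omega)
      apply htop
      intro i hi
      rcases lt_or_ge i m with h | h
      · exact Nat.decreasingInduction (motive := fun j _ => e j ∈ Z)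
          (fun j hj h => gen_step _ _ (by rwa [hN1 j hj])) f3 h.le
      · induction i, h using Nat.le_induction with
        | base => exact f3
        | succ j hj ih =>
          have := Z.add_mem (f2 j hj (by omega)) (ih (by omega))
          rwa [add_assoc, two, add_zero] at this
  · obtain rfl : n = m + 1 := by omega
    obtain ⟨E, hE⟩ := hdef fun i => if i < m then 0 else e (m + 1)
    have hE1 : ∀ i < m, E (e i) = 0 := fun i hi => by rw [hE i (by omega), if_pos hi]
    have hE2 : E (e m) = e (m + 1) := by rw [hE m (by omega), if_neg (by omega)]
    have hEs : E s = 0 := by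
      have : Submodule.span (ZMod 2) (e '' Set.Iio m) ≤ LinearMap.ker E := by
        rw [Submodule.span_le]
        rintro _ ⟨i, hi, rfl⟩
        exact hE1 i hi
      exact this hs
    have hE3 : E (e (m + 1)) = e (m + 1) := by
      conv_lhs => rw [hes]
      rw [map_add, hEs, hE2, add_zero]
    refine ⟨E, T - E, ?_, ?_, by abel⟩
    · apply hext
      intro i hi
      change E (E (e i)) = E (e i)
      rcases lt_or_ge i m with h | h
      · rw [hE1 i h, map_zero]
      · obtain rfl : i = m := by omega
        rw [hE2, hE3]
    · refine nilp_of_gen _ _ rfl (htop _ ?_)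
      have f3 : e m ∈ (T - E).maxGenEigenspace 0 := by
        apply gen_step
        rw [LinearMap.sub_apply, he, hE2, sub_self]
        exact zero_mem _
      intro i hi
      exact Nat.decreasingInduction (motive := fun j _ => e j ∈ (T - E).maxGenEigenspace 0)
        (fun j hj h => gen_step _ _ (by rwa [LinearMap.sub_apply, he, hE1 j hj, sub_zero])) f3
        (by omega : i ≤ m)

lemma indep_aux {V : Type*} [AddCommGroup V] [Module (ZMod 2) V] (e : ℕ → V) (n : ℕ)
    (h : ∀ m < n, e m ∉ Submodule.span (ZMod 2) (e '' Set.Iio m)) :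
    LinearIndependent (ZMod 2) (fun i : Fin n => e i) := by
  induction n with
  | zero => exact linearIndependent_empty_type
  | succ n ih =>
    rw [linearIndependent_finSucc']
    refine ⟨ih fun m hm => h m (by omega), ?_⟩
    have hs : Set.range (Fin.init fun i : Fin (n + 1) => e i) = e '' Set.Iio n := ?_
    · rw [hs]; exact h n (by omega)
    ext x
    constructor
    · rintro ⟨i, rfl⟩
      exact ⟨i, i.2, rfl⟩
    · rintro ⟨i, hi, rfl⟩
      exact ⟨⟨i, hi⟩, rfl⟩

lemma nilclean_end (d : ℕ) : ∀ {V : Type} [AddCommGroup V] [Module (ZMod 2) V]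
    [Module.Finite (ZMod 2) V] (T : Module.End (ZMod 2) V),
    Module.finrank (ZMod 2) V ≤ d →
    ∃ E N : Module.End (ZMod 2) V, IsIdempotentElem E ∧ IsNilpotent N ∧ T = E + N := by
  induction d with
  | zero =>
    intro V _ _ _ T hd
    have : Subsingleton V := (Module.finrank_zero_iff (R := ZMod 2)).1 (by omega)
    exact ⟨0, 0, IsIdempotentElem.zero, IsNilpotent.zero, Subsingleton.elim _ _⟩
  | succ d ih =>
    intro V _ _ _ T hd
    rcases subsingleton_or_nontrivial V with _ | _
    · exact ⟨0, 0, IsIdempotentElem.zero, IsNilpotent.zero, Subsingleton.elim _ _⟩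
    obtain ⟨v, hv⟩ := exists_ne (0 : V)
    let e : ℕ → V := fun i => (T ^ i) v
    have he : ∀ i, T (e i) = e (i + 1) := by
      intro i
      simp only [e]
      rw [pow_succ', Module.End.mul_apply]
    have hex : ∃ n, e n ∈ Submodule.span (ZMod 2) (e '' Set.Iio n) := by
      by_contra! h
      have h1 := (indep_aux e (Module.finrank (ZMod 2) V + 1) fun m _ => h m).fintype_card_le_finrank
      simp at h1
    classical
    have hspec := Nat.find_spec hex
    have hmin := fun m => @Nat.find_min _ _ hex m
    generalize Nat.find hex = n at hspec hmin
    have hli := indep_aux e n fun m hm => hmin m hm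
    have hn : n ≠ 0 := by
      rintro rfl
      exact hv (by simpa [e] using hspec)
    set p := Submodule.span (ZMod 2) (Set.range fun i : Fin n => e i) with hp
    have hpe : Submodule.span (ZMod 2) (e '' Set.Iio n) = p := by
      rw [hp]
      congr 1
      ext x
      constructor
      · rintro ⟨i, hi, rfl⟩
        exact ⟨⟨i, hi⟩, rfl⟩
      · rintro ⟨i, rfl⟩
        exact ⟨i, i.2, rfl⟩
    rw [hpe] at hspec
    have hep : ∀ i ≤ n, e i ∈ p := by
      intro i hi
      rcases hi.lt_or_eq with h | rfl
      · exact Submodule.subset_span ⟨⟨i, h⟩, rfl⟩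
      · exact hspec
    have hT : ∀ x ∈ p, T x ∈ p := by
      have : p ≤ p.comap T := by
        conv_lhs => rw [hp]
        rw [Submodule.span_le]
        rintro _ ⟨i, rfl⟩
        change T (e i) ∈ p
        rw [he]
        exact hep _ i.2
      exact this
    have hep' : ∀ i, e i ∈ p := by
      intro i
      induction i with
      | zero => exact hep 0 (by omega)
      | succ i ih => rw [← he]; exact hT _ ih
    obtain ⟨q, hq⟩ := Submodule.exists_isCompl p
    refine nilclean_block T p q hq hT ?_ ?_
    · intro S
      obtain ⟨E, N, h1, h2, h3⟩ := nilclean_cyclic (T.restrict hT) (fun i => ⟨e i, hep' i⟩)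
        (fun i => Subtype.ext (he i)) n (Module.Basis.span hli)
        (fun i => Subtype.ext (Module.Basis.coe_span_apply hli i))
      exact ⟨E, N, h1, h2, fun h => h.trans h3⟩
    · intro S
      apply ih
      have h1 := Submodule.finrank_add_eq_of_isCompl hq
      have h2 : 0 < Module.finrank (ZMod 2) p := by
        have : (⟨e 0, hep' 0⟩ : p) ≠ 0 := by
          intro h
          exact hv (by simpa [e] using congrArg Subtype.val h)
        have : Nontrivial p := ⟨_, _, this⟩
        exact Module.finrank_pos
      omega

lemma backward_main {D : Type*} [DivisionRing D] (n : ℕ) (f : D ≃+* ZMod 2) :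
    IsSqrtJCleanRing (Matrix (Fin n) (Fin n) D) := by
  intro A
  let g : Matrix (Fin n) (Fin n) D ≃+* Module.End (ZMod 2) (Fin n → ZMod 2) :=
    f.mapMatrix.trans (Matrix.toLinAlgEquiv' (R := ZMod 2) (n := Fin n)).toRingEquiv
  obtain ⟨E, N, hE, ⟨k, hk⟩, h⟩ := nilclean_end _ (g A) le_rfl
  refine ⟨g.symm E, g.symm N, ?_, ⟨k + 1, by omega, ?_⟩, ?_⟩
  · change _ * _ = _
    rw [← map_mul, hE.eq]
  · rw [← map_pow, pow_succ, hk, zero_mul, map_zero]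
    exact zero_mem _
  · rw [← map_add, ← h, RingEquiv.symm_apply_apply]

theorem matrix_divisionRing_sqrtJClean_iff (D : Type*) [DivisionRing D]
    (n : ℕ) (hn : 1 ≤ n) :
    IsSqrtJCleanRing (Matrix (Fin n) (Fin n) D) ↔ Nonempty (D ≃+* ZMod 2) := by
  exact ⟨forward_main n hn, fun ⟨f⟩ => backward_main n f⟩
end

section
/- Let R be a ring and M an (R,R)-bimodule. The trivial extension T(R,M) = R ∝ M (the ring of pairs (a, m) with componentwise addition and multiplication (r₁, m₁)(r₂, m₂) = (r₁r₂, r₁m₂ + m₁r₂)) is a √J-clean ring if and only if R is a √J-clean ring. -/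
theorem tsze_mem_jac (R M : Type*) [Ring R]
    [AddCommGroup M] [Module R M] [Module Rᵐᵒᵖ M] [SMulCommClass R Rᵐᵒᵖ M]
    (x : TrivSqZeroExt R M) :
    x ∈ (⊥ : TwoSidedIdeal (TrivSqZeroExt R M)).jacobson ↔
      x.fst ∈ (⊥ : TwoSidedIdeal R).jacobson := by
  simp only [TwoSidedIdeal.mem_jacobson_iff, TwoSidedIdeal.mem_bot]
  constructor
  · intro h y
    obtain ⟨z, hz⟩ := h (TrivSqZeroExt.inl y)
    refine ⟨z.fst, ?_⟩
    simpa using congrArg TrivSqZeroExt.fst hz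
  · intro h y
    obtain ⟨z, hz⟩ := h y.fst
    have key : ∀ w : TrivSqZeroExt R M, w.fst = 1 →
        (1 - TrivSqZeroExt.inr w.snd) * w = 1 := by
      intro w hw
      ext <;> simp [hw]
    refine ⟨(1 - TrivSqZeroExt.inr (TrivSqZeroExt.inl z * (y * x + 1)).snd) *
      TrivSqZeroExt.inl z, ?_⟩
    have := key (TrivSqZeroExt.inl z * (y * x + 1)) (by
      rw [sub_eq_zero] at hz
      simpa [mul_add, mul_assoc] using hz)
    rw [sub_eq_zero]
    refine Eq.trans ?_ this
    simp only [mul_add, mul_assoc, mul_one]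

theorem trivialExtension_sqrtJClean_iff (R M : Type*) [Ring R]
    [AddCommGroup M] [Module R M] [Module Rᵐᵒᵖ M] [SMulCommClass R Rᵐᵒᵖ M] :
    IsSqrtJCleanRing (TrivSqZeroExt R M) ↔ IsSqrtJCleanRing R := by
  constructor
  · intro h a
    obtain ⟨e, z, he, ⟨n, hn, hz⟩, haz⟩ := h (TrivSqZeroExt.inl a)
    refine ⟨e.fst, z.fst, ?_, ⟨n, hn, ?_⟩, ?_⟩
    · simpa [IsIdempotentElem] using congrArg TrivSqZeroExt.fst he
    · simpa using (tsze_mem_jac R M _).1 hz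
    · simpa using congrArg TrivSqZeroExt.fst haz
  · intro h a
    obtain ⟨e, z, he, ⟨n, hn, hz⟩, haz⟩ := h a.fst
    refine ⟨TrivSqZeroExt.inl e, TrivSqZeroExt.inl z + TrivSqZeroExt.inr a.snd, ?_,
      ⟨n, hn, ?_⟩, ?_⟩
    · change _ * _ = _
      rw [← TrivSqZeroExt.inl_mul, he.eq]
    · rw [tsze_mem_jac]
      simpa using hz
    · ext <;> simp [haz]
end
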